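/- Define δ₁ : ℝ × ℝ → ℂ by δ₁(k,t) := exp(iπ(kt/4 + k/2 + 3/2)) and δ₂ : ℝ × ℝ → ℂ by δ₂(t,k) := exp(iπ(−kt/4 − k/2 + 1)), and let S¹ = {z ∈ ℂ : |z| = 1} be the unit circle with its subspace topology. Let g₊, g₋ : [−1,1] → ℂ be continuous functions. Then there exists a continuous function f : S¹ → ℂ such that f(δ₂(t,k)) = 0 for all t ∈ [−1,1] and k ∈ {1,−1}, and f(δ₁(1,t)) = g₊(t) and f(δ₁(−1,t)) = g₋(t) for all t ∈ [−1,1], if and only if g₊(1) = g₊(−1) = g₋(1) = g₋(−1) = 0. -/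

import Mathlib

/-- `δ₁(k,t) = exp(iπ(kt/4 + k/2 + 3/2))`. -/
noncomputable def delta1 (k t : ℝ) : ℂ :=
  Complex.exp (Complex.I * (Real.pi : ℂ) *
    ((k : ℂ) * (t : ℂ) / 4 + (k : ℂ) / 2 + 3 / 2))

/-- `δ₂(t,k) = exp(iπ(−kt/4 − k/2 + 1))`. -/
noncomputable def delta2 (t k : ℝ) : ℂ :=
  Complex.exp (Complex.I * (Real.pi : ℂ) *
    (-((k : ℂ) * (t : ℂ)) / 4 - (k : ℂ) / 2 + 1))

/-!
In coordinates, `δ₁(k,t) = (k cos (πt/4), sin (πt/4))` and `δ₂(t,k) = (sin (πt/4), k cos (πt/4))`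
for `k = ±1`. At the four corners `(±√2/2, ±√2/2)` the two families of arcs meet, which forces the
values of `g₊` and `g₋` at the endpoints. Conversely, the parameter `t` of a point `δ₁(±1,t)` is a
function of its imaginary part alone; clamped to `[-1,1]`, this function is continuous on the whole
circle and constantly `±1` on each `δ₂`-arc. Composing it with `g₊` on the right half of the circle
and with `g₋` on the left half gives the extension; the halves meet at `±i`, where both composites
take the prescribed constant value.
-/

open Real

lemma delta1_eq_exp_ofReal_mul_I (k t : ℝ) :
    delta1 k t = Complex.exp ((π * (k * t / 4 + k / 2 + 3 / 2) : ℝ) * Complex.I) := by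
  rw [delta1]
  push_cast
  ring_nf

lemma delta2_eq_exp_ofReal_mul_I (t k : ℝ) :
    delta2 t k =
      Complex.exp ((π / 2 - π * (k * t / 4 + k / 2 + 3 / 2) + 2 * π : ℝ) * Complex.I) := by
  rw [delta2]
  push_cast
  ring_nf

lemma delta1_mem_sphere (k t : ℝ) : delta1 k t ∈ Metric.sphere (0 : ℂ) 1 := by
  rw [delta1_eq_exp_ofReal_mul_I, mem_sphere_zero_iff_norm, Complex.norm_exp_ofReal_mul_I]

lemma delta2_eq_swap_delta1 (t k : ℝ) : delta2 t k = ⟨(delta1 k t).im, (delta1 k t).re⟩ := by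
  rw [delta1_eq_exp_ofReal_mul_I, delta2_eq_exp_ofReal_mul_I]
  apply Complex.ext
  · rw [Complex.exp_ofReal_mul_I_re, Complex.exp_ofReal_mul_I_im, cos_add_two_pi,
      cos_pi_div_two_sub]
  · rw [Complex.exp_ofReal_mul_I_re, Complex.exp_ofReal_mul_I_im, sin_add_two_pi,
      sin_pi_div_two_sub]

lemma delta1_one (t : ℝ) : delta1 1 t = ⟨cos (π * t / 4), sin (π * t / 4)⟩ := by
  have angle : π * (1 * t / 4 + 1 / 2 + 3 / 2) = π * t / 4 + 2 * π := by ring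
  rw [delta1_eq_exp_ofReal_mul_I, angle]
  apply Complex.ext
  · rw [Complex.exp_ofReal_mul_I_re, cos_add_two_pi]
  · rw [Complex.exp_ofReal_mul_I_im, sin_add_two_pi]

lemma delta1_neg_one (t : ℝ) : delta1 (-1) t = ⟨-cos (π * t / 4), sin (π * t / 4)⟩ := by
  have angle : π * (-1 * t / 4 + -1 / 2 + 3 / 2) = π - π * t / 4 := by ring
  rw [delta1_eq_exp_ofReal_mul_I, angle]
  apply Complex.ext
  · rw [Complex.exp_ofReal_mul_I_re, cos_pi_sub]
  · rw [Complex.exp_ofReal_mul_I_im, sin_pi_sub]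

lemma delta1_corner_eq_delta2_corner {k s : ℝ} (hk : k = 1 ∨ k = -1) (hs : s = 1 ∨ s = -1) :
    delta1 k s = delta2 k s := by
  rcases hk with rfl | rfl <;> rcases hs with rfl | rfl <;>
    simp [delta2_eq_swap_delta1, delta1_one, delta1_neg_one, neg_div]

lemma sqrt_two_div_two_le_cos_of_mem_Icc {t : ℝ} (ht : t ∈ Set.Icc (-1 : ℝ) 1) :
    √2 / 2 ≤ cos (π * t / 4) := by
  have abs_angle_le : |π * t / 4| ≤ π / 4 := by
    rw [abs_div, abs_mul, abs_of_pos pi_pos, Nat.abs_ofNat]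
    gcongr
    exact mul_le_of_le_one_right pi_pos.le (abs_le.mpr ht)
  rw [← cos_pi_div_four, ← cos_abs (π * t / 4)]
  exact cos_le_cos_of_nonneg_of_le_pi (abs_nonneg _) (by linarith [pi_pos]) abs_angle_le

/-- The parameter `t` of the points `δ₁(±1,t)` with imaginary part `y = sin (πt/4)`, clamped to
`[-1,1]` so that it is defined for every `y`. -/
noncomputable def arcParameter (y : ℝ) : Set.Icc (-1 : ℝ) 1 :=
  Set.projIcc (-1) 1 (by norm_num) (4 / π * arcsin y)

lemma continuous_arcParameter : Continuous arcParameter :=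
  continuous_projIcc.comp (continuous_const.mul continuous_arcsin)

lemma arcParameter_sin (t : Set.Icc (-1 : ℝ) 1) : arcParameter (sin (π * t / 4)) = t := by
  obtain ⟨neg_one_le, le_one⟩ := t.2
  have arcsin_eq : arcsin (sin (π * t / 4)) = π * t / 4 :=
    arcsin_sin (by nlinarith [pi_pos]) (by nlinarith [pi_pos])
  have rescale : 4 / π * (π * t / 4) = (t : ℝ) := by field_simp
  rw [arcParameter, arcsin_eq, rescale, Set.projIcc_val]

lemma one_le_four_div_pi_mul_arcsin {y : ℝ} (hy : √2 / 2 ≤ y) : 1 ≤ 4 / π * arcsin y := by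
  have pi_div_four_le : π / 4 ≤ arcsin y := by
    rw [le_arcsin_iff_sin_le' ⟨by linarith [pi_pos], by linarith [pi_pos]⟩, sin_pi_div_four]
    exact hy
  calc (1 : ℝ) = 4 / π * (π / 4) := by field_simp
    _ ≤ 4 / π * arcsin y := by gcongr

lemma arcParameter_eq_one {y : ℝ} (hy : √2 / 2 ≤ y) : arcParameter y = ⟨1, by norm_num⟩ :=
  Set.projIcc_of_right_le _ (one_le_four_div_pi_mul_arcsin hy)

lemma arcParameter_neg_eq_neg_one {y : ℝ} (hy : √2 / 2 ≤ y) :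
    arcParameter (-y) = ⟨-1, by norm_num⟩ := by
  refine Set.projIcc_of_le_left _ ?_
  rw [arcsin_neg, mul_neg]
  exact neg_le_neg (one_le_four_div_pi_mul_arcsin hy)

lemma arcParameter_one : arcParameter 1 = ⟨1, by norm_num⟩ :=
  arcParameter_eq_one (cos_pi_div_four ▸ cos_le_one _)

lemma arcParameter_neg_one : arcParameter (-1) = ⟨-1, by norm_num⟩ :=
  arcParameter_neg_eq_neg_one (cos_pi_div_four ▸ cos_le_one _)

section HalfCircles

variable {Y : Type*}

/-- The function on the unit circle given by `a` on the closed right half and by `b` on the open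
left half, both as functions of the imaginary part. -/
noncomputable def glueHalfCircles (a b : ℝ → Y) (z : Metric.sphere (0 : ℂ) 1) : Y :=
  if 0 ≤ (z : ℂ).re then a (z : ℂ).im else b (z : ℂ).im

lemma im_eq_one_or_neg_one_of_re_eq_zero (z : Metric.sphere (0 : ℂ) 1) (hz : (z : ℂ).re = 0) :
    (z : ℂ).im = 1 ∨ (z : ℂ).im = -1 := by
  rw [← abs_eq zero_le_one, Complex.abs_im_eq_norm.mpr hz]
  exact mem_sphere_zero_iff_norm.mp z.2

lemma continuous_glueHalfCircles [TopologicalSpace Y] {a b : ℝ → Y} (ha : Continuous a)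
    (hb : Continuous b) (h_one : a 1 = b 1) (h_neg_one : a (-1) = b (-1)) :
    Continuous (glueHalfCircles a b) := by
  have continuous_im : Continuous fun z : Metric.sphere (0 : ℂ) 1 => (z : ℂ).im :=
    Complex.continuous_im.comp continuous_subtype_val
  refine Continuous.if_le (ha.comp continuous_im) (hb.comp continuous_im) continuous_const
    (Complex.continuous_re.comp continuous_subtype_val) fun z hz => ?_
  rcases im_eq_one_or_neg_one_of_re_eq_zero z hz.symm with him | him
  · simpa only [Function.comp_apply, him] using h_one
  · simpa only [Function.comp_apply, him] using h_neg_one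

end HalfCircles

section ArcExtension

variable {Y : Type*} {y₀ : Y} {gp gm : Set.Icc (-1 : ℝ) 1 → Y}

/-- The extension to the unit circle of the functions `gp` and `gm` prescribed on the arcs
`δ₁(1,·)` and `δ₁(-1,·)`, continuing along the arcs `δ₂(·,±1)` with their endpoint values. -/
noncomputable def arcExtension (gp gm : Set.Icc (-1 : ℝ) 1 → Y) : Metric.sphere (0 : ℂ) 1 → Y :=
  glueHalfCircles (gp ∘ arcParameter) (gm ∘ arcParameter)

lemma continuous_arcExtension [TopologicalSpace Y] (hgp : Continuous gp) (hgm : Continuous gm)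
    (h_one : gp ⟨1, by norm_num⟩ = gm ⟨1, by norm_num⟩)
    (h_neg_one : gp ⟨-1, by norm_num⟩ = gm ⟨-1, by norm_num⟩) :
    Continuous (arcExtension gp gm) := by
  refine continuous_glueHalfCircles (hgp.comp continuous_arcParameter)
    (hgm.comp continuous_arcParameter) ?_ ?_
  · simpa only [Function.comp_apply, arcParameter_one] using h_one
  · simpa only [Function.comp_apply, arcParameter_neg_one] using h_neg_one

lemma arcExtension_of_eq_delta1_one {t : Set.Icc (-1 : ℝ) 1} {z : Metric.sphere (0 : ℂ) 1}
    (hz : (z : ℂ) = delta1 1 t) : arcExtension gp gm z = gp t := by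
  have cos_nonneg : 0 ≤ cos (π * t / 4) :=
    le_trans (by positivity) (sqrt_two_div_two_le_cos_of_mem_Icc t.2)
  simp only [arcExtension, glueHalfCircles, hz, delta1_one, if_pos cos_nonneg,
    Function.comp_apply, arcParameter_sin]

lemma arcExtension_of_eq_delta1_neg_one {t : Set.Icc (-1 : ℝ) 1} {z : Metric.sphere (0 : ℂ) 1}
    (hz : (z : ℂ) = delta1 (-1) t) : arcExtension gp gm z = gm t := by
  have cos_pos : 0 < cos (π * t / 4) :=
    lt_of_lt_of_le (by positivity) (sqrt_two_div_two_le_cos_of_mem_Icc t.2)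
  simp only [arcExtension, glueHalfCircles, hz, delta1_neg_one,
    if_neg (neg_neg_of_pos cos_pos).not_ge, Function.comp_apply, arcParameter_sin]

lemma arcExtension_of_eq_delta2_one (hgp : gp ⟨1, by norm_num⟩ = y₀)
    (hgm : gm ⟨1, by norm_num⟩ = y₀) {t : ℝ} (ht : t ∈ Set.Icc (-1 : ℝ) 1)
    {z : Metric.sphere (0 : ℂ) 1} (hz : (z : ℂ) = delta2 t 1) : arcExtension gp gm z = y₀ := by
  simp only [arcExtension, glueHalfCircles, hz, delta2_eq_swap_delta1, delta1_one,
    Function.comp_apply, arcParameter_eq_one (sqrt_two_div_two_le_cos_of_mem_Icc ht), hgp, hgm,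
    ite_self]

lemma arcExtension_of_eq_delta2_neg_one (hgp : gp ⟨-1, by norm_num⟩ = y₀)
    (hgm : gm ⟨-1, by norm_num⟩ = y₀) {t : ℝ} (ht : t ∈ Set.Icc (-1 : ℝ) 1)
    {z : Metric.sphere (0 : ℂ) 1} (hz : (z : ℂ) = delta2 t (-1)) :
    arcExtension gp gm z = y₀ := by
  simp only [arcExtension, glueHalfCircles, hz, delta2_eq_swap_delta1, delta1_neg_one,
    Function.comp_apply, arcParameter_neg_eq_neg_one (sqrt_two_div_two_le_cos_of_mem_Icc ht), hgp,
    hgm, ite_self]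

lemma eq_of_eq_on_delta1_of_const_on_delta2 {f : Metric.sphere (0 : ℂ) 1 → Y}
    {g : Set.Icc (-1 : ℝ) 1 → Y} {k : ℝ} (hk : k = 1 ∨ k = -1)
    (hf₁ : ∀ (t : Set.Icc (-1 : ℝ) 1) (z : Metric.sphere (0 : ℂ) 1),
      (z : ℂ) = delta1 k t → f z = g t)
    (hf₂ : ∀ t k : ℝ, t ∈ Set.Icc (-1 : ℝ) 1 → (k = 1 ∨ k = -1) →
      ∀ z : Metric.sphere (0 : ℂ) 1, (z : ℂ) = delta2 t k → f z = y₀)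
    (s : Set.Icc (-1 : ℝ) 1) (hs : (s : ℝ) = 1 ∨ (s : ℝ) = -1) : g s = y₀ := by
  have hk_mem : k ∈ Set.Icc (-1 : ℝ) 1 := by rcases hk with rfl | rfl <;> norm_num
  let corner : Metric.sphere (0 : ℂ) 1 := ⟨delta1 k s, delta1_mem_sphere k s⟩
  calc g s = f corner := (hf₁ s corner rfl).symm
    _ = y₀ := hf₂ k s hk_mem hs corner (delta1_corner_eq_delta2_corner hk hs)

end ArcExtension

theorem stmt14_general {Y : Type*} [TopologicalSpace Y] (y₀ : Y)
    {gp gm : Set.Icc (-1 : ℝ) 1 → Y} (hgp : Continuous gp) (hgm : Continuous gm) :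
    (∃ f : Metric.sphere (0 : ℂ) 1 → Y, Continuous f ∧
      (∀ t k : ℝ, t ∈ Set.Icc (-1 : ℝ) 1 → (k = 1 ∨ k = -1) →
        ∀ z : Metric.sphere (0 : ℂ) 1, (z : ℂ) = delta2 t k → f z = y₀) ∧
      (∀ (t : Set.Icc (-1 : ℝ) 1) (z : Metric.sphere (0 : ℂ) 1),
        ((z : ℂ) = delta1 1 t → f z = gp t) ∧ ((z : ℂ) = delta1 (-1) t → f z = gm t))) ↔
    (gp ⟨1, by norm_num⟩ = y₀ ∧ gp ⟨-1, by norm_num⟩ = y₀ ∧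
      gm ⟨1, by norm_num⟩ = y₀ ∧ gm ⟨-1, by norm_num⟩ = y₀) := by
  constructor
  · rintro ⟨f, -, hf₂, hf₁⟩
    have gp_endpoint := eq_of_eq_on_delta1_of_const_on_delta2 (.inl rfl)
      (fun t z => (hf₁ t z).1) hf₂
    have gm_endpoint := eq_of_eq_on_delta1_of_const_on_delta2 (.inr rfl)
      (fun t z => (hf₁ t z).2) hf₂
    exact ⟨gp_endpoint _ (.inl rfl), gp_endpoint _ (.inr rfl),
      gm_endpoint _ (.inl rfl), gm_endpoint _ (.inr rfl)⟩
  · rintro ⟨gp_one, gp_neg_one, gm_one, gm_neg_one⟩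
    refine ⟨arcExtension gp gm, ?_, ?_, fun t z =>
      ⟨arcExtension_of_eq_delta1_one, arcExtension_of_eq_delta1_neg_one⟩⟩
    · exact continuous_arcExtension hgp hgm (gp_one.trans gm_one.symm)
        (gp_neg_one.trans gm_neg_one.symm)
    · rintro t k ht (rfl | rfl) z hz
      · exact arcExtension_of_eq_delta2_one gp_one gm_one ht hz
      · exact arcExtension_of_eq_delta2_neg_one gp_neg_one gm_neg_one ht hz

/-- Let `g₊, g₋ : [-1,1] → ℂ` be continuous.  There exists a continuous
`f : S¹ → ℂ` with `f(δ₂(t,k)) = 0` for all `t ∈ [-1,1]`, `k ∈ {1,-1}`, and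
`f(δ₁(1,t)) = g₊(t)`, `f(δ₁(-1,t)) = g₋(t)` for all `t ∈ [-1,1]`, if and only if
`g₊(1) = g₊(-1) = g₋(1) = g₋(-1) = 0`. -/
theorem stmt14 (gp gm : ↥(Set.Icc (-1 : ℝ) 1) → ℂ)
    (hgp : Continuous gp) (hgm : Continuous gm) :
    (∃ f : ↥(Metric.sphere (0 : ℂ) 1) → ℂ, Continuous f ∧
      (∀ t k : ℝ, t ∈ Set.Icc (-1 : ℝ) 1 → (k = 1 ∨ k = -1) →
        ∀ z : ↥(Metric.sphere (0 : ℂ) 1), (z : ℂ) = delta2 t k → f z = 0) ∧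
      (∀ t : ↥(Set.Icc (-1 : ℝ) 1), ∀ z : ↥(Metric.sphere (0 : ℂ) 1),
        ((z : ℂ) = delta1 1 (t : ℝ) → f z = gp t) ∧
        ((z : ℂ) = delta1 (-1) (t : ℝ) → f z = gm t))) ↔
    (gp ⟨1, by norm_num⟩ = 0 ∧ gp ⟨-1, by norm_num⟩ = 0 ∧
      gm ⟨1, by norm_num⟩ = 0 ∧ gm ⟨-1, by norm_num⟩ = 0) :=
  stmt14_general 0 hgp hgm
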